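/- arXiv:2604.27990 — 7 statements merged into one kernel-verified Lean document; each statement's English description precedes it below -/
import Mathlib

section
/- Let α and β be standard Borel spaces, μ a Borel probability measure on α, T : α → α a measurable bijection with measurable inverse which is measure-preserving for μ, S : β → β a measurable bijection with measurable inverse, and π : α → β a measurable map with π ∘ T = S ∘ π. Set ν = Measure.map π μ, and let κ : β → Measure α be a disintegration of μ over π. Then for ν-almost every b ∈ β one has κ (S b) = Measure.map T (κ b). -/
open MeasureTheory

/-!
The disintegration property together with concentration on fibers gives
`∫⁻ b in B, κ b A ∂ν = μ (A ∩ π ⁻¹' B)` (`setLIntegral_disintegration`). Since `S` preserves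
`ν = μ.map π`, the integrals over `B` of `b ↦ κ (S b) A` and of `b ↦ κ b (T ⁻¹' A)` are both equal
to `μ (T ⁻¹' A ∩ π ⁻¹' B)`, so these two functions agree almost everywhere for each fixed `A`.
As `α` is countably generated, one null set serves for all `A` in a countable generating
algebra of sets, and the two probability measures then coincide
(`ae_eq_of_forall_ae_apply_eq`).
-/

/-- The family `κ` integrates over a set `B` of base points to `μ` restricted to `π ⁻¹' B`. -/
lemma setLIntegral_disintegration {α β : Type*} [MeasurableSpace α] [MeasurableSpace β]
    [MeasurableSingletonClass β] {μ : Measure α} {π : α → β} (hπ : Measurable π)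
    {κ : β → Measure α}
    (hκprob : ∀ᵐ b ∂(Measure.map π μ), IsProbabilityMeasure (κ b))
    (hκfiber : ∀ᵐ b ∂(Measure.map π μ), κ b (π ⁻¹' {b}) = 1)
    (hκdis : ∀ A : Set α, MeasurableSet A → μ A = ∫⁻ b, κ b A ∂(Measure.map π μ))
    {A : Set α} (hA : MeasurableSet A) {B : Set β} (hB : MeasurableSet B) :
    ∫⁻ b in B, κ b A ∂(Measure.map π μ) = μ (A ∩ π ⁻¹' B) := by
  rw [hκdis _ (hA.inter (hπ hB)), ← lintegral_indicator hB]
  refine lintegral_congr_ae ?_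
  filter_upwards [hκprob, hκfiber] with b hp hf
  have hfib : ∀ᵐ x ∂(κ b), π x = b :=
    (prob_compl_eq_zero_iff (hπ (measurableSet_singleton b))).2 hf
  by_cases hb : b ∈ B
  · rw [Set.indicator_of_mem hb]
    refine measure_congr ?_
    filter_upwards [hfib] with x hx
    refine propext ⟨fun h => ⟨h, ?_⟩, fun h => h.1⟩
    simpa [hx] using hb
  · rw [Set.indicator_of_notMem hb]
    refine (measure_eq_zero_iff_ae_notMem.2 ?_).symm
    filter_upwards [hfib] with x hx h
    exact hb (hx ▸ h.2)

/-- On a countably generated space, families of probability measures that agree almost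
everywhere on each fixed measurable set agree almost everywhere as measures. -/
lemma ae_eq_of_forall_ae_apply_eq {α β : Type*} [MeasurableSpace α]
    [MeasurableSpace.CountablyGenerated α] [MeasurableSpace β] {ν : Measure β}
    {κ η : β → Measure α}
    (hκ : ∀ᵐ b ∂ν, IsProbabilityMeasure (κ b)) (hη : ∀ᵐ b ∂ν, IsProbabilityMeasure (η b))
    (h : ∀ A : Set α, MeasurableSet A → ∀ᵐ b ∂ν, κ b A = η b A) :
    ∀ᵐ b ∂ν, κ b = η b := by
  let C : Set (Set α) := generateSetAlgebra (MeasurableSpace.countableGeneratingSet α)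
  have hC : C.Countable :=
    countable_generateSetAlgebra MeasurableSpace.countable_countableGeneratingSet
  have hgen : ‹MeasurableSpace α› = MeasurableSpace.generateFrom C := by
    rw [generateFrom_generateSetAlgebra_eq, MeasurableSpace.generateFrom_countableGeneratingSet]
  have hall : ∀ᵐ b ∂ν, ∀ A ∈ C, κ b A = η b A :=
    (ae_ball_iff hC).2 fun A hA =>
      h A (hgen ▸ MeasurableSpace.measurableSet_generateFrom hA)
  filter_upwards [hκ, hη, hall] with b hκb hηb hb
  exact ext_of_generate_finite C hgen isSetAlgebra_generateSetAlgebra.isSetRing.isSetSemiring.isPiSystem hb (by simp)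

/-- Invariance of the disintegration: if `T` is a measure-preserving measurable bijection
(with measurable inverse) of `(α, μ)`, `S` a measurable bijection of `β` with `π ∘ T = S ∘ π`,
and `κ` is a disintegration of `μ` over `π`, then for `(μ.map π)`-almost every `b` one has
`κ (S b) = (κ b).map T`. -/
theorem disintegration_equivariant {α β : Type*}
    [MeasurableSpace α] [StandardBorelSpace α] [MeasurableSpace β] [StandardBorelSpace β]
    (μ : Measure α) [IsProbabilityMeasure μ]
    (T : α ≃ᵐ α) (hT : MeasurePreserving T μ μ)
    (S : β ≃ᵐ β) (π : α → β) (hπ : Measurable π)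
    (hcomm : π ∘ ⇑T = ⇑S ∘ π)
    (κ : β → Measure α) (hκmeas : Measurable κ)
    (hκprob : ∀ᵐ b ∂(Measure.map π μ), IsProbabilityMeasure (κ b))
    (hκfiber : ∀ᵐ b ∂(Measure.map π μ), κ b (π ⁻¹' {b}) = 1)
    (hκdis : ∀ A : Set α, MeasurableSet A → μ A = ∫⁻ b, κ b A ∂(Measure.map π μ)) :
    ∀ᵐ b ∂(Measure.map π μ), κ (S b) = Measure.map T (κ b) := by
  have : IsProbabilityMeasure (Measure.map π μ) :=
    Measure.isProbabilityMeasure_map hπ.aemeasurable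
  have hS : MeasurePreserving S (Measure.map π μ) (Measure.map π μ) := by
    refine ⟨S.measurable, ?_⟩
    rw [Measure.map_map S.measurable hπ, ← hcomm, ← Measure.map_map hπ T.measurable, hT.map_eq]
  refine ae_eq_of_forall_ae_apply_eq (hS.quasiMeasurePreserving.ae hκprob) ?_ fun A hA => ?_
  · filter_upwards [hκprob] with b hb
    exact Measure.isProbabilityMeasure_map T.measurable.aemeasurable
  have hκA : ∀ {A : Set α}, MeasurableSet A → Measurable fun b => κ b A := fun hA =>
    (Measure.measurable_coe hA).comp hκmeas
  simp_rw [Measure.map_apply T.measurable hA]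
  refine ae_eq_of_forall_setLIntegral_eq_of_sigmaFinite ((hκA hA).comp S.measurable)
    (hκA (T.measurable hA)) fun B hB _ => ?_
  have hSB : MeasurableSet (S.symm ⁻¹' B) := S.symm.measurable hB
  have hBS : S ⁻¹' (S.symm ⁻¹' B) = B := by ext; simp
  have hpre : T ⁻¹' (A ∩ π ⁻¹' (S.symm ⁻¹' B)) = T ⁻¹' A ∩ π ⁻¹' B := by
    rw [Set.preimage_inter, ← Set.preimage_comp (g := π), hcomm, Set.preimage_comp, hBS]
  calc ∫⁻ b in B, κ (S b) A ∂(Measure.map π μ)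
      = ∫⁻ b in S.symm ⁻¹' B, κ b A ∂(Measure.map π μ) := by
        rw [← hS.setLIntegral_comp_preimage hSB (hκA hA), hBS]
    _ = μ (A ∩ π ⁻¹' (S.symm ⁻¹' B)) :=
        setLIntegral_disintegration hπ hκprob hκfiber hκdis hA hSB
    _ = μ (T ⁻¹' A ∩ π ⁻¹' B) := by
        rw [← hpre, hT.measure_preimage (hA.inter (hπ hSB)).nullMeasurableSet]
    _ = ∫⁻ b in B, κ b (T ⁻¹' A) ∂(Measure.map π μ) :=
        (setLIntegral_disintegration hπ hκprob hκfiber hκdis (T.measurable hA) hB).symm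
end

section
/- Let α and β be standard Borel spaces, μ a Borel probability measure on α, T : α → α a measurable bijection with measurable inverse which is measure-preserving for μ, S : β → β a measurable bijection with measurable inverse, and π : α → β a measurable map with π ∘ T = S ∘ π. Set ν = Measure.map π μ, and let κ : β → Measure α be a disintegration of μ over π. Then the function x ↦ κ (π x) ({x}) is almost invariant under T: for μ-almost every x ∈ α, κ (π (T x)) ({T x}) = κ (π x) ({x}). -/
/-!
The proof rests on the uniqueness of disintegrations. Since `T` preserves `μ` and `π` intertwines
`T` with `S`, the map `S` preserves `ν = π_* μ`, and the family `b ↦ (T⁻¹)_* κ (S b)` is again a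
disintegration of `μ` over `π`. By uniqueness it agrees with `κ` for `ν`-almost every `b`, and
evaluating both measures at the singleton `{x}` with `b = π x` gives the claim, because
`(T⁻¹)_* κ (S (π x)) {x} = κ (π (T x)) {T x}`.

Uniqueness (`disintegration_unique`) holds because any disintegration `κ` satisfies
`ν ⊗ₘ κ = (π, id)_* μ` (`exists_kernel_of_disintegration`), which does not depend on `κ`, and the
composition-product determines a finite kernel almost everywhere when the target is countably
generated.
-/

open MeasureTheory

open ProbabilityTheory in
/-- A disintegration agrees almost everywhere with a finite kernel whose composition-product with
`ν` is the image of `μ` under the graph map `x ↦ (π x, x)`. -/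
lemma exists_kernel_of_disintegration {α β : Type*}
    [MeasurableSpace α] [MeasurableSpace β] [StandardBorelSpace β]
    (μ : Measure α) (ν : Measure β) [IsFiniteMeasure ν] (π : α → β) (hπ : Measurable π)
    (κ : β → Measure α) (hκmeas : Measurable κ)
    (hκprob : ∀ᵐ b ∂ν, IsProbabilityMeasure (κ b))
    (hκfiber : ∀ᵐ b ∂ν, κ b (π ⁻¹' {b}) = 1)
    (hκdis : ∀ A : Set α, MeasurableSet A → μ A = ∫⁻ b, κ b A ∂ν) :
    ∃ η : Kernel β α, IsFiniteKernel η ∧ κ =ᵐ[ν] η ∧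
      ν ⊗ₘ η = μ.map (fun x ↦ (π x, x)) := by
  classical
  -- The kernel is `κ` cut off to zero on the null set where `κ b` is not a probability measure.
  have hG : MeasurableSet {b | κ b Set.univ = 1} :=
    (Measure.measurable_coe MeasurableSet.univ).comp hκmeas (measurableSet_singleton 1)
  let η : Kernel β α := Kernel.piecewise hG ⟨κ, hκmeas⟩ 0
  have hη : ∀ b, η b = if κ b Set.univ = 1 then κ b else 0 := fun b ↦ rfl
  have hfin : IsFiniteKernel η := by
    refine ⟨1, ENNReal.one_lt_top, fun b ↦ ?_⟩
    rw [hη]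
    split_ifs with h
    · exact h.le
    · simp
  have hae : κ =ᵐ[ν] η := by
    filter_upwards [hκprob] with b hb
    rw [hη, if_pos hb.measure_univ]
  refine ⟨η, hfin, hae, ?_⟩
  ext s hs
  have hgraph : Measurable (fun x ↦ (π x, x)) := hπ.prodMk measurable_id
  rw [Measure.compProd_apply hs, Measure.map_apply hgraph hs, hκdis _ (hgraph hs)]
  refine lintegral_congr_ae ?_
  filter_upwards [hae, hκprob, hκfiber] with b hb hprob hfib
  rw [← hb]
  refine measure_congr ?_
  have hx : ∀ᵐ x ∂κ b, x ∈ π ⁻¹' {b} :=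
    (prob_compl_eq_zero_iff (hπ (measurableSet_singleton b))).2 hfib
  filter_upwards [hx] with x hx
  obtain rfl : π x = b := hx
  rfl

open ProbabilityTheory in
/-- Two disintegrations of the same measure over `π` agree almost everywhere. -/
lemma disintegration_unique {α β : Type*}
    [MeasurableSpace α] [StandardBorelSpace α] [MeasurableSpace β] [StandardBorelSpace β]
    (μ : Measure α) (ν : Measure β) [IsFiniteMeasure ν] (π : α → β) (hπ : Measurable π)
    (κ : β → Measure α) (hκmeas : Measurable κ)
    (hκprob : ∀ᵐ b ∂ν, IsProbabilityMeasure (κ b))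
    (hκfiber : ∀ᵐ b ∂ν, κ b (π ⁻¹' {b}) = 1)
    (hκdis : ∀ A : Set α, MeasurableSet A → μ A = ∫⁻ b, κ b A ∂ν)
    (η : β → Measure α) (hηmeas : Measurable η)
    (hηprob : ∀ᵐ b ∂ν, IsProbabilityMeasure (η b))
    (hηfiber : ∀ᵐ b ∂ν, η b (π ⁻¹' {b}) = 1)
    (hηdis : ∀ A : Set α, MeasurableSet A → μ A = ∫⁻ b, η b A ∂ν) :
    κ =ᵐ[ν] η := by
  obtain ⟨κ', _, hκ, hκ'⟩ :=
    exists_kernel_of_disintegration μ ν π hπ κ hκmeas hκprob hκfiber hκdis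
  obtain ⟨η', _, hη, hη'⟩ :=
    exists_kernel_of_disintegration μ ν π hπ η hηmeas hηprob hηfiber hηdis
  exact hκ.trans ((Kernel.ae_eq_of_compProd_eq (hκ'.trans hη'.symm)).trans hη.symm)

/-- The conditional mass that a point carries inside its own fiber is almost invariant
under the dynamics: `κ (π (T x)) {T x} = κ (π x) {x}` for `μ`-a.e. `x`. -/
theorem fiber_atom_mass_invariant {α β : Type*}
    [MeasurableSpace α] [StandardBorelSpace α] [MeasurableSpace β] [StandardBorelSpace β]
    (μ : Measure α) [IsProbabilityMeasure μ]
    (T : α ≃ᵐ α) (hT : MeasurePreserving T μ μ)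
    (S : β ≃ᵐ β) (π : α → β) (hπ : Measurable π)
    (hcomm : π ∘ ⇑T = ⇑S ∘ π)
    (κ : β → Measure α) (hκmeas : Measurable κ)
    (hκprob : ∀ᵐ b ∂(Measure.map π μ), IsProbabilityMeasure (κ b))
    (hκfiber : ∀ᵐ b ∂(Measure.map π μ), κ b (π ⁻¹' {b}) = 1)
    (hκdis : ∀ A : Set α, MeasurableSet A → μ A = ∫⁻ b, κ b A ∂(Measure.map π μ)) :
    ∀ᵐ x ∂μ, κ (π (T x)) {T x} = κ (π x) {x} := by
  have hπT : ∀ x, π (T x) = S (π x) := fun x ↦ congrFun hcomm x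
  have hS : MeasurePreserving S (μ.map π) (μ.map π) := by
    refine ⟨S.measurable, ?_⟩
    rw [Measure.map_map S.measurable hπ, ← hcomm, ← Measure.map_map hπ T.measurable, hT.map_eq]
  have hTsymm : MeasurePreserving T.symm μ μ := hT.symm T
  have huniq : κ =ᵐ[μ.map π] fun b ↦ (κ (S b)).map T.symm := by
    refine disintegration_unique μ (μ.map π) π hπ κ hκmeas hκprob hκfiber hκdis _
      ((Measure.measurable_map _ T.symm.measurable).comp (hκmeas.comp S.measurable)) ?_ ?_ ?_
    · filter_upwards [hS.quasiMeasurePreserving.ae hκprob] with b hb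
      exact Measure.isProbabilityMeasure_map T.symm.measurable.aemeasurable
    · filter_upwards [hS.quasiMeasurePreserving.ae hκfiber] with b hb
      rw [T.symm.map_apply, ← hb]
      congr 1
      ext x
      have h := hπT (T.symm x)
      rw [T.apply_symm_apply] at h
      simp [h]
    · intro A hA
      simp_rw [T.symm.map_apply]
      rw [hS.lintegral_comp (f := fun b ↦ κ b (T.symm ⁻¹' A))
          ((Measure.measurable_coe (T.symm.measurable hA)).comp hκmeas),
        ← hκdis _ (T.symm.measurable hA), hTsymm.measure_preimage hA.nullMeasurableSet]
  filter_upwards [ae_of_ae_map hπ.aemeasurable huniq] with x hx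
  rw [hx, T.symm.map_apply, hπT]
  congr 1
  ext y
  simp [T.symm_apply_eq]
end

section
/- Let α and β be standard Borel spaces, μ a Borel probability measure on α, T : α → α a measurable bijection with measurable inverse which is ergodic with respect to μ, S : β → β a measurable bijection with measurable inverse, and π : α → β a measurable map with π ∘ T = S ∘ π. Assume every fiber π ⁻¹' {b} (b ∈ β) is countable, and set ν = Measure.map π μ. Then there exist a natural number k ≥ 1 and a measurable map L : β → α such that π (L b) = b for ν-almost every b ∈ β, and Measure.map L ν ≤ k • μ; in particular Measure.map L ν is absolutely continuous with respect to μ. -/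
open MeasureTheory

/-!
Let `κ b` be the conditional distribution of `μ` on the fibre of `π` over `b`. Uniqueness of
disintegrations makes `κ` equivariant, `κ (S b) = T_* (κ b)` for almost every `b`, so the mass
`a ↦ κ (π a) {a}` that a point carries in its own fibre is `T`-invariant. By ergodicity it is a
constant `c`, and `c ≠ 0` because `κ b` lives on a countable set. Hence almost every `κ b` is
carried by finitely many atoms, all of mass `c`.

A section is obtained by selecting in each fibre the atom that is smallest for a Borel embedding
`e : α → ℝ`. The points selected form the Borel set of those `a` such that both `{a}` and the
initial segment `{x | e x ≤ e a}` have `κ (π a)`-mass `c`. The map `π` is injective on this set, so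
the Lusin–Souslin theorem provides a measurable inverse `L`. As `κ b {L b} = c` almost surely,
`ν (L ⁻¹' A) ≤ c⁻¹ * ∫ κ b A ∂ν = c⁻¹ * μ A`, and any integer `k ≥ c⁻¹` bounds the push-forward.
-/

open ProbabilityTheory Set

/-- The mass given by `κ (π a)` to the section over `a` of a measurable set of pairs depends
measurably on `a`. -/
lemma measurable_kernel_section {α β : Type*} [MeasurableSpace α] [MeasurableSpace β]
    (κ : Kernel β α) [IsFiniteKernel κ] {π : α → β} (hπ : Measurable π)
    {s : Set (α × α)} (hs : MeasurableSet s) :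
    Measurable fun a => κ (π a) {x | (a, x) ∈ s} :=
  Kernel.measurable_kernel_prodMk_left (κ := κ.comap π hπ) hs

/-- Equivariance of the disintegration of an invariant measure over a factor. -/
lemma condDistrib_equivariant {α β : Type*}
    [MeasurableSpace α] [StandardBorelSpace α] [Nonempty α] [MeasurableSpace β]
    (μ : Measure α) [IsProbabilityMeasure μ]
    (T : α ≃ᵐ α) (hT : MeasurePreserving T μ μ)
    (S : β ≃ᵐ β) (π : α → β) (hπ : Measurable π) (hcomm : π ∘ T = S ∘ π) :
    ∀ᵐ a ∂μ, condDistrib id π μ (π (T a)) = (condDistrib id π μ (π a)).map T := by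
  have hpt : ∀ a, π (T a) = S (π a) := fun a => congrFun hcomm a
  have key : condDistrib id π μ =ᵐ[μ.map π]
      ((condDistrib id π μ).comap S.symm S.symm.measurable).map T := by
    refine condDistrib_ae_eq_of_measure_eq_compProd π aemeasurable_id ?_
    have := Measure.isFiniteMeasure_map μ (fun x => (π x, id x))
    refine Measure.ext_prod fun {s t} hs ht => ?_
    have hmeas : Measurable fun b => condDistrib id π μ (S.symm b) (T ⁻¹' t) :=
      (Kernel.measurable_coe _ (T.measurable ht)).comp S.symm.measurable
    rw [Measure.compProd_apply_prod hs ht, Measure.map_apply (hπ.prodMk measurable_id) (hs.prod ht)]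
    simp only [Kernel.map_apply' _ T.measurable _ ht, Kernel.comap_apply]
    rw [setLIntegral_map hs hmeas hπ]
    -- The integral is transported by `T` to one of `a ↦ κ (π a)`.
    rw [← hT.setLIntegral_comp_preimage (hπ hs)
      (f := fun a => condDistrib id π μ (S.symm (π a)) (T ⁻¹' t)) (hmeas.comp hπ)]
    simp only [hpt, MeasurableEquiv.symm_apply_apply]
    have h1 : T ⁻¹' (π ⁻¹' s) = π ⁻¹' (S ⁻¹' s) := by
      ext a; simp [hpt]
    rw [h1, setLIntegral_preimage_condDistrib hπ aemeasurable_id (T.measurable ht)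
      (S.measurable hs), ← h1]
    rw [preimage_id, ← preimage_inter, hT.measure_preimage ((hπ hs).inter ht).nullMeasurableSet]
    rfl
  filter_upwards [hT.quasiMeasurePreserving.ae (ae_of_ae_map hπ.aemeasurable key)] with a ha
  rw [ha, Kernel.map_apply _ T.measurable, Kernel.comap_apply, hpt, S.symm_apply_apply]

/-- A probability measure almost all of whose points are atoms of a common mass `c ≠ 0` has a
smallest atom with respect to any injective real-valued function. -/
lemma exists_min_atom {α : Type*} [MeasurableSpace α] [MeasurableSingletonClass α]
    (m : Measure α) [IsProbabilityMeasure m] {c : ENNReal} (hc : c ≠ 0)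
    {P : α → Prop} (hP : ∀ᵐ a ∂m, P a ∧ m {a} = c) {e : α → ℝ} (he : Function.Injective e) :
    ∃ a, P a ∧ m {a} = c ∧ m {x | e x ≤ e a} = c := by
  have hfin : {a | P a ∧ m {a} = c}.Finite := by
    refine (Measure.finite_const_le_meas_of_disjoint_iUnion m (pos_iff_ne_zero.2 hc)
      (As := fun a : α => {a}) (fun a => measurableSet_singleton a) ?_
      (measure_ne_top _ _)).subset fun a ha => ha.2.ge
    intro a b hab
    simpa [Function.onFun] using hab
  obtain ⟨a, ha, hmin⟩ := exists_min_image _ e hfin hP.exists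
  refine ⟨a, ha.1, ha.2, ?_⟩
  rw [← ha.2]
  refine measure_congr ?_
  filter_upwards [hP] with x hx
  refine propext ⟨fun h => he (le_antisymm h (hmin x hx)), fun h => ?_⟩
  have : x = a := h
  exact (congrArg e this).le

/-- For an ergodic countable-to-one factor map `π` between standard Borel systems, there
are `k ≥ 1` and a measurable section `L` of `π` defined `ν`-a.e. (`ν = μ.map π`) whose
pushforward of `ν` is dominated by `k • μ`; in particular it is absolutely continuous
with respect to `μ`. -/
theorem exists_measurable_section_absolutelyContinuous {α β : Type*}
    [MeasurableSpace α] [StandardBorelSpace α] [MeasurableSpace β] [StandardBorelSpace β]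
    (μ : Measure α) [IsProbabilityMeasure μ]
    (T : α ≃ᵐ α) (hT : Ergodic (⇑T) μ)
    (S : β ≃ᵐ β) (π : α → β) (hπ : Measurable π)
    (hcomm : π ∘ ⇑T = ⇑S ∘ π)
    (hcount : ∀ b : β, (π ⁻¹' {b}).Countable) :
    ∃ k : ℕ, 1 ≤ k ∧ ∃ L : β → α, Measurable L ∧
      (∀ᵐ b ∂(Measure.map π μ), π (L b) = b) ∧
      Measure.map L (Measure.map π μ) ≤ (k : ENNReal) • μ ∧
      Measure.map L (Measure.map π μ) ≪ μ := by
  have hne : Nonempty α := nonempty_of_isProbabilityMeasure μ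
  have hν : IsProbabilityMeasure (μ.map π) := Measure.isProbabilityMeasure_map hπ.aemeasurable
  have hequiv := condDistrib_equivariant μ T hT.toMeasurePreserving S π hπ hcomm
  have hcomp : (μ.map π).bind (condDistrib id π μ) = μ := by
    rw [condDistrib_comp_map hπ.aemeasurable aemeasurable_id, Measure.map_id]
  have hfib : ∀ᵐ b ∂(μ.map π), ∀ᵐ a ∂(condDistrib id π μ b), π a = b := by
    have h : ∀ᵐ p ∂(μ.map π ⊗ₘ condDistrib id π μ), π p.2 = p.1 := by
      rw [compProd_map_condDistrib aemeasurable_id]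
      exact (ae_map_iff (hπ.prodMk measurable_id).aemeasurable
        (measurableSet_eq_fun (hπ.comp measurable_snd) measurable_fst)).2
          (ae_of_all _ fun _ => rfl)
    exact Measure.ae_ae_of_ae_compProd h
  have hκ : IsMarkovKernel (condDistrib id π μ) := inferInstance
  generalize condDistrib id π μ = κ at *
  -- The mass of each point in its own fibre is a nonzero constant.
  have hfm : Measurable fun a => κ (π a) {a} := by
    have h := measurable_kernel_section κ hπ (s := {p : α × α | p.2 = p.1})
      (measurableSet_eq_fun measurable_snd measurable_fst)
    exact h
  obtain ⟨c, hc⟩ : ∃ c, (fun a => κ (π a) {a}) =ᵐ[μ] Function.const α c := by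
    refine hT.ae_eq_const_of_ae_eq_comp₀ hfm.nullMeasurable ?_
    filter_upwards [hequiv] with a ha
    have hpre : T ⁻¹' {T a} = {a} := by
      ext x; simp
    simp only [Function.comp_apply]
    rw [ha, Measure.map_apply T.measurable (measurableSet_singleton _), hpre]
  have hdis : ∀ {P : α → Prop}, (∀ᵐ a ∂μ, P a) → ∀ᵐ b ∂(μ.map π), ∀ᵐ a ∂(κ b), P a := by
    intro P hP
    rw [← hcomp] at hP
    exact Measure.ae_ae_of_ae_comp hP
  have hatoms : ∀ᵐ b ∂(μ.map π), ∀ᵐ a ∂(κ b), π a = b ∧ κ b {a} = c := by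
    filter_upwards [hfib, hdis hc] with b h1 h2
    filter_upwards [h1, h2] with a h3 h4
    refine ⟨h3, ?_⟩
    rw [← h3]
    exact h4
  have hc0 : c ≠ 0 := by
    rintro rfl
    obtain ⟨b, hb⟩ := hatoms.exists
    have hnull : κ b {a | π a = b ∧ κ b {a} = 0} = 0 :=
      (measure_null_iff_singleton ((hcount b).mono fun a ha => ha.1)).2 fun a ha => ha.2
    obtain ⟨a, ha, ha'⟩ := (hb.and (measure_eq_zero_iff_ae_notMem.1 hnull)).exists
    exact ha' ha
  -- The set of smallest atoms of the fibre measures.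
  obtain ⟨e, hem, hei⟩ : ∃ e : α → ℝ, Measurable e ∧ Function.Injective e :=
    ⟨embeddingReal α, (measurableEmbedding_embeddingReal α).measurable,
      (measurableEmbedding_embeddingReal α).injective⟩
  have hgm : Measurable fun a => κ (π a) {x | e x ≤ e a} :=
    measurable_kernel_section κ hπ (s := {p : α × α | e p.2 ≤ e p.1})
      (measurableSet_le (hem.comp measurable_snd) (hem.comp measurable_fst))
  let E : Set α := {a | κ (π a) {a} = c ∧ κ (π a) {x | e x ≤ e a} = c}
  have hE : MeasurableSet E :=
    (hfm (measurableSet_singleton c)).inter (hgm (measurableSet_singleton c))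
  -- Two atoms in an initial segment give it mass at least `c + c`, which exceeds `c`.
  have hlt : ∀ a ∈ E, ∀ a' ∈ E, π a = π a' → ¬ e a < e a' := by
    intro a ha a' ha' hπa hlt
    have hsub : ({a} ∪ {a'} : Set α) ⊆ {x | e x ≤ e a'} := by
      rintro x (rfl | rfl)
      · exact hlt.le
      · exact le_refl (e x)
    have hle := measure_mono (μ := κ (π a')) hsub
    have hdisj : Disjoint ({a} : Set α) {a'} := by
      rw [disjoint_singleton]
      rintro rfl
      exact lt_irrefl _ hlt
    rw [measure_union hdisj (measurableSet_singleton _), ha'.2, ha'.1, ← hπa, ha.1] at hle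
    have hctop : c ≠ ⊤ := ha.1 ▸ measure_ne_top _ _
    exact (ENNReal.lt_add_right hctop hc0).not_ge hle
  have hinj : Function.Injective fun a : E => π a := by
    intro a a' h
    refine Subtype.ext (hei (le_antisymm ?_ ?_))
    · exact not_lt.1 (hlt a' a'.2 a a.2 h.symm)
    · exact not_lt.1 (hlt a a.2 a' a'.2 h)
  have : StandardBorelSpace E := hE.standardBorel
  obtain ⟨L, hLm, hL⟩ := ((hπ.comp measurable_subtype_coe).measurableEmbedding
    hinj).exists_measurable_extend measurable_subtype_coe fun _ => hne
  have hLE : ∀ a ∈ E, L (π a) = a := fun a ha => congrFun hL ⟨a, ha⟩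
  have hLb : ∀ᵐ b ∂(μ.map π), π (L b) = b ∧ κ b {L b} = c := by
    filter_upwards [hatoms] with b hb
    obtain ⟨a, rfl, h1, h2⟩ := exists_min_atom (κ b) hc0 hb hei
    rw [hLE a ⟨h1, h2⟩]
    exact ⟨rfl, h1⟩
  obtain ⟨k, hk⟩ := ENNReal.exists_nat_gt (ENNReal.inv_ne_top.2 hc0)
  have hdom : Measure.map L (Measure.map π μ) ≤ (k : ENNReal) • μ := by
    refine Measure.le_iff.2 fun A hA => ?_
    have hctop : c ≠ ⊤ := by
      obtain ⟨b, hb⟩ := hLb.exists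
      exact hb.2 ▸ measure_ne_top _ _
    have hκc : ∀ᵐ b ∂(μ.map π), (L ⁻¹' A).indicator 1 b ≤ c⁻¹ * κ b A := by
      filter_upwards [hLb] with b hb
      by_cases hbA : b ∈ L ⁻¹' A
      · rw [indicator_of_mem hbA, Pi.one_apply, ← ENNReal.inv_mul_cancel hc0 hctop]
        gcongr
        rw [← hb.2]
        exact measure_mono (singleton_subset_iff.2 hbA)
      · rw [indicator_of_notMem hbA]
        exact zero_le
    calc Measure.map L (Measure.map π μ) A = ∫⁻ b, (L ⁻¹' A).indicator 1 b ∂(μ.map π) := by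
          rw [Measure.map_apply hLm hA, lintegral_indicator_one (hLm hA)]
      _ ≤ ∫⁻ b, c⁻¹ * κ b A ∂(μ.map π) := lintegral_mono_ae hκc
      _ = c⁻¹ * μ A := by
          rw [lintegral_const_mul _ (κ.measurable_coe hA),
            ← Measure.bind_apply hA κ.measurable.aemeasurable, hcomp]
      _ ≤ ((k : ENNReal) • μ) A := by
          rw [Measure.smul_apply, smul_eq_mul]
          gcongr
  refine ⟨k, ?_, L, hLm, hLb.mono fun b hb => hb.1, hdom,
    (Measure.absolutelyContinuous_of_le hdom).trans (Measure.smul_absolutelyContinuous)⟩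
  exact Nat.cast_pos.1 (pos_of_gt hk)
end

section
/- Let α, α′ and β be standard Borel spaces, μ and μ′ Borel probability measures on α and α′ respectively, S : β → β a measurable bijection with measurable inverse, T′ : α′ → α′ a measurable bijection with measurable inverse which is ergodic with respect to μ′, and π′ : α′ → β a measurable map with π′ ∘ T′ = S ∘ π′ whose fibers π′ ⁻¹' {b} are all countable. Let π : α → β be a measurable map with Measure.map π μ = Measure.map π′ μ′. Then there exists a measurable map Φ : α → α′ such that π′ (Φ x) = π x for μ-almost every x ∈ α, and Measure.map Φ μ is absolutely continuous with respect to μ′. -/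
open MeasureTheory

/-!
Write `ν = π'_* μ'` and disintegrate `μ'` over `π'`, giving a Markov kernel `κ` from `β` to `α'`.
For `ν`-almost every `b` the probability measure `κ b` lives on the countable fiber over `b`, so it
has an atom. If `σ : β → α'` is a measurable map choosing an atom of `κ b` for almost every `b`
(`exists_measurable_atom_selection`), then `σ b` lies in the fiber over `b`, and a `μ'`-null set is
`κ b`-null for almost every `b`, so it does not contain `σ b`; thus `σ_* ν ≪ μ'`. The map
`Φ = σ ∘ π` then has the required properties because `π_* μ = ν`.

The measurable selection is explicit: `σ b` is the heaviest atom of `κ b`, ties being broken by an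
injection of `α'` into `ℝ`. All sets involved are measurable because a set of atoms is nonempty
exactly when it has positive measure, which turns the existential quantifiers over `α'` into
conditions on the measures `κ b`.
-/

namespace MelodyProof

open ProbabilityTheory

/-- `atomBetter m f x y` says that `y` is a strictly heavier atom of `m` than `x`, or an equally
heavy one preceding `x` for the tie-breaking function `f`. -/
def atomBetter {γ : Type*} [MeasurableSpace γ] (m : Measure γ) (f : γ → ℝ) (x y : γ) : Prop :=
  m {x} < m {y} ∨ (m {x} = m {y} ∧ f y < f x)

/-- Only finitely many atoms are at least as heavy as a given one, so a best atom exists. -/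
lemma exists_best_atom {γ : Type*} [MeasurableSpace γ] [MeasurableSingletonClass γ]
    (m : Measure γ) [IsFiniteMeasure m] (f : γ → ℝ) (h : ∃ x, m {x} ≠ 0) :
    ∃ x, m {x} ≠ 0 ∧ ∀ y, ¬ atomBetter m f x y := by
  obtain ⟨x₀, hx₀⟩ := h
  have hfin : {y | m {x₀} ≤ m {y}}.Finite :=
    Measure.finite_const_le_meas_of_disjoint_iUnion m (pos_iff_ne_zero.2 hx₀)
      (fun y => measurableSet_singleton y)
      (fun y z hyz => Set.disjoint_singleton.2 hyz) (measure_ne_top _ _)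
  obtain ⟨x₁, hx₁, hmax⟩ :=
    Set.exists_max_image _ (fun y => m {y}) hfin ⟨x₀, le_refl (m {x₀})⟩
  obtain ⟨x₂, hx₂, hmin⟩ :=
    Set.exists_min_image {y | m {x₀} ≤ m {y} ∧ m {y} = m {x₁}} f
      (hfin.subset fun y hy => hy.1) ⟨x₁, hx₁, rfl⟩
  refine ⟨x₂, fun h0 => hx₀ (le_antisymm (hx₂.1.trans h0.le) bot_le), ?_⟩
  rintro y (hy | ⟨hy, hf⟩)
  · exact absurd (hmax y (hx₂.1.trans hy.le)) (not_le.2 (hx₂.2 ▸ hy))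
  · exact absurd (hmin y ⟨hx₂.1.trans hy.le, hy.symm.trans hx₂.2⟩) (not_le.2 hf)

lemma measurable_kernel_singleton {β γ : Type*} [MeasurableSpace β] [MeasurableSpace γ]
    [StandardBorelSpace γ] (κ : Kernel β γ) [IsFiniteKernel κ] :
    Measurable fun p : β × γ => κ p.1 {p.2} := by
  have hs : MeasurableSet {q : (β × γ) × γ | q.2 = q.1.2} :=
    measurableSet_eq_fun measurable_snd (measurable_snd.comp measurable_fst)
  exact Kernel.measurable_kernel_prodMk_left (κ := κ.comap Prod.fst measurable_fst) hs

/-- A finite kernel into a standard Borel space admits a measurable selection of atoms. -/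
lemma exists_measurable_atom_selection {β γ : Type*} [MeasurableSpace β] [MeasurableSpace γ]
    [StandardBorelSpace γ] [Nonempty γ] (κ : Kernel β γ) [IsFiniteKernel κ] :
    ∃ σ : β → γ, Measurable σ ∧ ∀ b, (∃ x, κ b {x} ≠ 0) → κ b {σ b} ≠ 0 := by
  classical
  set f : γ → ℝ := embeddingReal γ
  have hf : MeasurableEmbedding f := measurableEmbedding_embeddingReal γ
  have hmass := measurable_kernel_singleton κ
  -- `E` is the graph of the best-atom selection, with absence of better atoms stated as nullity.
  let E : Set (β × γ) :=
    {p | κ p.1 {p.2} ≠ 0 ∧ κ p.1 {y | atomBetter (κ p.1) f p.2 y} = 0}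
  have hE : MeasurableSet E := by
    have hx : Measurable fun q : (β × γ) × γ => κ q.1.1 {q.1.2} := hmass.comp measurable_fst
    have hy : Measurable fun q : (β × γ) × γ => κ q.1.1 {q.2} :=
      hmass.comp ((measurable_fst.comp measurable_fst).prodMk measurable_snd)
    have hs : MeasurableSet {q : (β × γ) × γ | atomBetter (κ q.1.1) f q.1.2 q.2} :=
      (measurableSet_lt hx hy).union ((measurableSet_eq_fun hx hy).inter
        (measurableSet_lt (hf.measurable.comp measurable_snd)
          (hf.measurable.comp (measurable_snd.comp measurable_fst))))
    have hbetter : Measurable fun p : β × γ => κ p.1 {y | atomBetter (κ p.1) f p.2 y} :=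
      Kernel.measurable_kernel_prodMk_left (κ := κ.comap Prod.fst measurable_fst) hs
    exact (hmass (measurableSet_singleton 0)).compl.inter (hbetter (measurableSet_singleton 0))
  have hE_iff : ∀ b x, (b, x) ∈ E ↔ κ b {x} ≠ 0 ∧ ∀ y, ¬ atomBetter (κ b) f x y := by
    intro b x
    refine and_congr_right fun hx => ⟨fun h0 y hy => hx ?_, fun h => ?_⟩
    · have h1 : κ b {y} = 0 := measure_mono_null (Set.singleton_subset_iff.2 hy) h0
      have h2 : κ b {x} ≤ κ b {y} := by
        rcases hy with hy | hy
        exacts [hy.le, hy.1.le]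
      exact le_antisymm (h2.trans h1.le) bot_le
    · simp [h]
  have huniq : ∀ b x y, (b, x) ∈ E → (b, y) ∈ E → x = y := by
    intro b x y hx hy
    have h1 := ((hE_iff b x).1 hx).2 y
    have h2 := ((hE_iff b y).1 hy).2 x
    simp only [atomBetter, not_or, not_and, not_lt] at h1 h2
    have h3 := le_antisymm h2.1 h1.1
    exact hf.injective (le_antisymm (h1.2 h3) (h2.2 h3.symm))
  let c : γ := Classical.arbitrary γ
  let σ : β → γ := fun b => if h : ∃ x, (b, x) ∈ E then h.choose else c
  have hσ : ∀ b, (∃ x, (b, x) ∈ E) → (b, σ b) ∈ E := by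
    intro b h
    simp only [σ, dif_pos h]
    exact h.choose_spec
  -- The sections of `E` consist of atoms, so projecting to `β` preserves measurability.
  have hproj : ∀ s : Set γ, MeasurableSet s → MeasurableSet {b | ∃ x, (b, x) ∈ E ∧ x ∈ s} := by
    intro s hs
    have hm : Measurable fun b => κ b {x | (b, x) ∈ E ∧ x ∈ s} :=
      Kernel.measurable_kernel_prodMk_left (κ := κ) (hE.inter (measurable_snd hs))
    convert (hm (measurableSet_singleton 0)).compl using 1
    ext b
    simp only [Set.mem_ofPred_eq, Set.mem_compl_iff, Set.mem_preimage, Set.mem_singleton_iff]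
    constructor
    · rintro ⟨x, hx, hxs⟩ h0
      exact hx.1 (measure_mono_null
        (Set.singleton_subset_iff.2 (show x ∈ {x | (b, x) ∈ E ∧ x ∈ s} from ⟨hx, hxs⟩)) h0)
    · intro h
      exact nonempty_of_measure_ne_zero h
  refine ⟨σ, fun s hs => ?_, fun b hb => ?_⟩
  · have hdom := hproj Set.univ MeasurableSet.univ
    have : σ ⁻¹' s = {b | ∃ x, (b, x) ∈ E ∧ x ∈ s} ∪
        ({b | ∃ x, (b, x) ∈ E ∧ x ∈ Set.univ}ᶜ ∩ {_b | c ∈ s}) := by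
      ext b
      by_cases h : ∃ x, (b, x) ∈ E
      · have hb := hσ b h
        simp only [Set.mem_preimage, Set.mem_union, Set.mem_inter_iff, Set.mem_compl_iff,
          Set.mem_ofPred_eq, Set.mem_univ, and_true, h, not_true_eq_false, false_and, or_false]
        exact ⟨fun hs => ⟨_, hb, hs⟩, fun ⟨x, hx, hxs⟩ => huniq b x _ hx hb ▸ hxs⟩
      · have hc : σ b = c := dif_neg h
        have h' : ¬ ∃ x, (b, x) ∈ E ∧ x ∈ s := fun ⟨x, hx, _⟩ => h ⟨x, hx⟩
        simp only [Set.mem_preimage, Set.mem_union, Set.mem_inter_iff, Set.mem_compl_iff,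
          Set.mem_ofPred_eq, Set.mem_univ, and_true, h, h', hc, not_false_eq_true, true_and,
          false_or]
    rw [this]
    exact (hproj s hs).union (hdom.compl.inter (MeasurableSet.const _))
  · obtain ⟨x, hx⟩ := exists_best_atom (κ b) f hb
    exact (hσ b ⟨x, (hE_iff b x).2 hx⟩).1

end MelodyProof

/-- Abstract form of the substantive direction of Theorem 1: if the two melody maps `π`
and `π'` have the same pushforward measures, `π'` being a countable-to-one factor map of
an ergodic system, then there is a measurable map `Φ` with `π' ∘ Φ = π` almost everywhere
whose pushforward of `μ` is absolutely continuous with respect to `μ'`. -/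
theorem exists_map_same_melody_absolutelyContinuous {α α' β : Type*}
    [MeasurableSpace α] [StandardBorelSpace α]
    [MeasurableSpace α'] [StandardBorelSpace α']
    [MeasurableSpace β] [StandardBorelSpace β]
    (μ : Measure α) [IsProbabilityMeasure μ]
    (μ' : Measure α') [IsProbabilityMeasure μ']
    (S : β ≃ᵐ β)
    (T' : α' ≃ᵐ α') (hT' : Ergodic (⇑T') μ')
    (π' : α' → β) (hπ' : Measurable π') (hcomm' : π' ∘ ⇑T' = ⇑S ∘ π')
    (hcount : ∀ b : β, (π' ⁻¹' {b}).Countable)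
    (π : α → β) (hπ : Measurable π)
    (heq : Measure.map π μ = Measure.map π' μ') :
    ∃ Φ : α → α', Measurable Φ ∧ (∀ᵐ x ∂μ, π' (Φ x) = π x) ∧
      Measure.map Φ μ ≪ μ' := by
  have : Nonempty α' := nonempty_of_isProbabilityMeasure μ'
  let κ := ProbabilityTheory.condDistrib (id : α' → α') π' μ'
  have hκ : (μ'.map π').compProd κ = μ'.map (fun x => (π' x, x)) :=
    ProbabilityTheory.compProd_map_condDistrib aemeasurable_id
  have hgraph : Measurable fun x : α' => (π' x, x) := hπ'.prodMk measurable_id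
  obtain ⟨σ, hσm, hσ⟩ := MelodyProof.exists_measurable_atom_selection κ
  have hfiber : ∀ᵐ b ∂(μ'.map π'), ∀ᵐ x ∂(κ b), π' x = b := by
    apply Measure.ae_ae_of_ae_compProd (p := fun q : β × α' => π' q.2 = q.1)
    rw [hκ]
    refine (ae_map_iff hgraph.aemeasurable
      (measurableSet_eq_fun (hπ'.comp measurable_snd) measurable_fst)).2 ?_
    exact Filter.Eventually.of_forall fun x => rfl
  -- A probability measure carried by a countable fiber has an atom.
  have hatom : ∀ᵐ b ∂(μ'.map π'), κ b {σ b} ≠ 0 := by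
    filter_upwards [hfiber] with b hb
    apply hσ b
    by_contra! h
    have h0 : κ b (π' ⁻¹' {b}) = 0 := by
      rw [← Set.biUnion_of_singleton (π' ⁻¹' {b}), measure_biUnion_null_iff (hcount b)]
      exact fun x _ => h x
    have h1 : κ b (π' ⁻¹' {b})ᶜ = 0 := hb
    have h2 : κ b Set.univ = 0 := by
      rw [← Set.union_compl_self (π' ⁻¹' {b})]
      exact measure_union_null h0 h1
    simp at h2
  refine ⟨σ ∘ π, hσm.comp hπ, ?_, ?_⟩
  · have hsec : ∀ᵐ b ∂(μ.map π), π' (σ b) = b := by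
      rw [heq]
      filter_upwards [hfiber, hatom] with b hb hb'
      by_contra hne
      exact hb' (measure_mono_null (Set.singleton_subset_iff.2 hne) hb)
    exact ae_of_ae_map hπ.aemeasurable hsec
  · refine Measure.AbsolutelyContinuous.mk fun s hs hs0 => ?_
    rw [← Measure.map_map hσm hπ, heq, Measure.map_apply hσm hs]
    have hnull : ∀ᵐ b ∂(μ'.map π'), ∀ᵐ x ∂(κ b), x ∉ s := by
      apply Measure.ae_ae_of_ae_compProd (p := fun q : β × α' => q.2 ∉ s)
      rw [hκ]
      refine (ae_map_iff hgraph.aemeasurable (measurable_snd hs.compl)).2 ?_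
      exact measure_eq_zero_iff_ae_notMem.1 hs0
    rw [measure_eq_zero_iff_ae_notMem]
    filter_upwards [hnull, hatom] with b hb hb' hbs
    exact hb' (measure_mono_null (Set.singleton_subset_iff.2 (not_not.2 hbs)) hb)
end

section
/- Let α, α′ and β be measurable spaces, μ and μ′ probability measures on α and α′ respectively, T : α → α ergodic with respect to μ, T′ : α′ → α′ ergodic with respect to μ′, S : β → β a measurable map, and π : α → β, π′ : α′ → β measurable maps with π ∘ T = S ∘ π and π′ ∘ T′ = S ∘ π′. Suppose there exists a measurable map Φ : α → α′ such that π′ (Φ x) = π x for μ-almost every x ∈ α and Measure.map Φ μ is absolutely continuous with respect to μ′. Then Measure.map π μ = Measure.map π′ μ′. -/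
/-!
Both pushforwards to `β` are ergodic for `S`, being factors of ergodic systems. Since
`π' ∘ Φ = π` almost everywhere, `Measure.map π μ` is the pushforward of `Measure.map Φ μ` under
`π'`, hence absolutely continuous with respect to `Measure.map π' μ'`. An invariant probability
measure absolutely continuous with respect to an ergodic one equals it, because its density is
invariant and so almost everywhere constant (`Ergodic.eq_of_absolutelyContinuous`).
-/

open MeasureTheory

/-- Abstract form of the easy direction of Theorem 1: if an absolutely continuous map `Φ`
sends `μ`-a.e. point to a point with the identical melody, then the pushforwards of the
two ergodic invariant probability measures under the melody maps coincide. -/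
theorem map_eq_of_absolutelyContinuous_semiconj {α α' β : Type*}
    [MeasurableSpace α] [MeasurableSpace α'] [MeasurableSpace β]
    (μ : Measure α) [IsProbabilityMeasure μ]
    (μ' : Measure α') [IsProbabilityMeasure μ']
    (T : α → α) (hT : Ergodic T μ)
    (T' : α' → α') (hT' : Ergodic T' μ')
    (S : β → β) (hS : Measurable S)
    (π : α → β) (hπ : Measurable π)
    (π' : α' → β) (hπ' : Measurable π')
    (hcomm : π ∘ T = S ∘ π) (hcomm' : π' ∘ T' = S ∘ π')
    (Φ : α → α') (hΦ : Measurable Φ)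
    (hae : ∀ᵐ x ∂μ, π' (Φ x) = π x)
    (habs : Measure.map Φ μ ≪ μ') :
    Measure.map π μ = Measure.map π' μ' := by
  have hprob : IsProbabilityMeasure (Measure.map π μ) :=
    Measure.isProbabilityMeasure_map hπ.aemeasurable
  have hprob' : IsProbabilityMeasure (Measure.map π' μ') :=
    Measure.isProbabilityMeasure_map hπ'.aemeasurable
  have herg : Ergodic S (Measure.map π μ) :=
    (hπ.measurePreserving μ).ergodic_of_ergodic_semiconj hT hS (congrFun hcomm)
  have herg' : Ergodic S (Measure.map π' μ') :=
    (hπ'.measurePreserving μ').ergodic_of_ergodic_semiconj hT' hS (congrFun hcomm')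
  have hfactor : Measure.map π μ = Measure.map π' (Measure.map Φ μ) := by
    rw [Measure.map_map hπ' hΦ]
    exact (Measure.map_congr hae).symm
  refine herg'.eq_of_absolutelyContinuous herg.toMeasurePreserving ?_
  rw [hfactor]
  exact habs.map hπ'
end

section
/- Let Z be a metric space equipped with its Borel σ-algebra, let (ν_n) be a sequence of Borel probability measures on Z converging weakly to a Borel probability measure λ, let τ : Z → ℝ be a Borel function, let V ⊆ Z be an open set with λ(Z \ V) = 0 such that τ is continuous on V, and assume λ(τ ⁻¹' {t}) = 0 for every t ∈ ℝ. Let U ⊆ Z be an open set with λ(frontier U) = 0. Define the cumulative distribution functions F_n(t) = (ν_n (U ∩ τ ⁻¹' (Set.Ioc 0 t))).toReal and F(t) = (λ (U ∩ τ ⁻¹' (Set.Ioc 0 t))).toReal. Then F is continuous on ℝ, and F_n converges to F uniformly on every compact subset of ℝ. -/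
/-!
The frontier of `U ∩ τ ⁻¹' (0, t]` is contained in
`frontier U ∪ Vᶜ ∪ τ ⁻¹' {0} ∪ τ ⁻¹' {t}`, which is `lam`-null, so the portmanteau theorem gives
pointwise convergence of the distribution functions. The limit is continuous because
`s ↦ 1_{(0, s]} (τ z)` is locally constant near `s = t` unless `τ z = t`, which happens on a null
set. Finally, pointwise convergence of monotone functions to a continuous function is locally
uniform (Pólya's argument: compare with the values at two nearby points on either side).
-/

open MeasureTheory Filter
open Topology

theorem mem_frontier_of_mem_frontier_preimage {X Y : Type*} [TopologicalSpace X]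
    [TopologicalSpace Y] {f : X → Y} {S : Set Y} {x : X} (hf : ContinuousAt f x)
    (hx : x ∈ frontier (f ⁻¹' S)) : f x ∈ frontier S := by
  rw [frontier_eq_closure_inter_closure] at hx ⊢
  exact ⟨mem_closure_iff_frequently.2 (hf.frequently (mem_closure_iff_frequently.1 hx.1)),
    mem_closure_iff_frequently.2 (hf.frequently (mem_closure_iff_frequently.1 hx.2))⟩

theorem frontier_Ioc_subset_pair (a b : ℝ) : frontier (Set.Ioc a b) ⊆ {a, b} := by
  rcases lt_or_ge a b with h | h
  · rw [frontier_Ioc h]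
  · simp [Set.Ioc_eq_empty_of_le h]

/-- Pólya's argument: monotonicity sandwiches `F n` near `t` between its values at two points
`a < t < b` at which the continuous limit differs little from its value at `t`. -/
theorem tendstoLocallyUniformly_of_monotone {F : ℕ → ℝ → ℝ} {f : ℝ → ℝ}
    (hF : ∀ n, Monotone (F n)) (hfm : Monotone f) (hf : Continuous f)
    (hlim : ∀ t, Tendsto (fun n => F n t) atTop (𝓝 (f t))) :
    TendstoLocallyUniformly F f atTop := by
  rw [Metric.tendstoLocallyUniformly_iff]
  intro ε hε t
  obtain ⟨δ, hδ, hball⟩ := Metric.continuous_iff.1 hf t (ε / 3) (by positivity)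
  have ha := hball (t - δ / 2) (by rw [Real.dist_eq, abs_lt]; constructor <;> linarith)
  have hb := hball (t + δ / 2) (by rw [Real.dist_eq, abs_lt]; constructor <;> linarith)
  refine ⟨Set.Icc (t - δ / 2) (t + δ / 2), Icc_mem_nhds (by linarith) (by linarith), ?_⟩
  filter_upwards [Metric.tendsto_nhds.1 (hlim (t - δ / 2)) (ε / 3) (by positivity),
    Metric.tendsto_nhds.1 (hlim (t + δ / 2)) (ε / 3) (by positivity)] with n hna hnb s hs
  have h1 := hF n hs.1
  have h2 := hF n hs.2
  have h3 := hfm hs.1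
  have h4 := hfm hs.2
  rw [Real.dist_eq, abs_lt] at *
  constructor <;> linarith

/-- Convergence of cumulative distribution functions: if probability measures `ν n`
converge weakly to `lam`, `τ` is a Borel function which is continuous on an open set of
full `lam`-measure and has `lam`-null level sets, and `U` is an open set whose frontier
is `lam`-null, then the cumulative distribution functions
`t ↦ ν n (U ∩ τ ⁻¹' (0, t])` converge to the continuous function
`t ↦ lam (U ∩ τ ⁻¹' (0, t])` uniformly on compact subsets of `ℝ`. -/
theorem cdf_tendstoUniformlyOn_of_weak_convergence {Z : Type*}
    [MetricSpace Z] [MeasurableSpace Z] [BorelSpace Z]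
    (ν : ℕ → ProbabilityMeasure Z) (lam : ProbabilityMeasure Z)
    (hweak : Tendsto ν atTop (nhds lam))
    (τ : Z → ℝ) (hτ : Measurable τ)
    (V : Set Z) (hV : IsOpen V) (hVfull : (lam : Measure Z) Vᶜ = 0)
    (hτcont : ContinuousOn τ V)
    (hlevel : ∀ t : ℝ, (lam : Measure Z) (τ ⁻¹' {t}) = 0)
    (U : Set Z) (hU : IsOpen U) (hfr : (lam : Measure Z) (frontier U) = 0) :
    Continuous (fun t : ℝ => ((lam : Measure Z) (U ∩ τ ⁻¹' Set.Ioc 0 t)).toReal) ∧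
      ∀ K : Set ℝ, IsCompact K →
        TendstoUniformlyOn
          (fun (n : ℕ) (t : ℝ) => ((ν n : Measure Z) (U ∩ τ ⁻¹' Set.Ioc 0 t)).toReal)
          (fun t : ℝ => ((lam : Measure Z) (U ∩ τ ⁻¹' Set.Ioc 0 t)).toReal)
          atTop K := by
  have hmono : ∀ μ : ProbabilityMeasure Z,
      Monotone fun t : ℝ => ((μ : Measure Z) (U ∩ τ ⁻¹' Set.Ioc 0 t)).toReal := fun μ s t hst =>
    ENNReal.toReal_mono (measure_ne_top _ _) (measure_mono
      (Set.inter_subset_inter_right _ (Set.preimage_mono (Set.Ioc_subset_Ioc_right hst))))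
  have hmeas : ∀ t : ℝ, MeasurableSet (U ∩ τ ⁻¹' Set.Ioc 0 t) := fun t =>
    hU.measurableSet.inter (hτ measurableSet_Ioc)
  have hcont : Continuous
      (fun t : ℝ => ((lam : Measure Z) (U ∩ τ ⁻¹' Set.Ioc 0 t)).toReal) := by
    refine continuous_iff_continuousAt.2 fun t => ?_
    refine (ENNReal.tendsto_toReal (measure_ne_top _ _)).comp ?_
    refine tendsto_measure_of_ae_tendsto_indicator_of_isFiniteMeasure (𝓝 t) (hmeas t) hmeas ?_
    have hne : ∀ᵐ z ∂(lam : Measure Z), z ∉ τ ⁻¹' {t} := measure_eq_zero_iff_ae_notMem.1 (hlevel t)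
    filter_upwards [hne] with z hz
    rcases lt_or_gt_of_ne (show τ z ≠ t from hz) with h | h
    · filter_upwards [lt_mem_nhds h] with s hs
      simp [h.le, hs.le]
    · filter_upwards [gt_mem_nhds h] with s hs
      simp [h.not_ge, hs.not_ge]
  have hfrontier : ∀ t : ℝ, (lam : Measure Z) (frontier (U ∩ τ ⁻¹' Set.Ioc 0 t)) = 0 := by
    intro t
    have hsub : frontier (U ∩ τ ⁻¹' Set.Ioc 0 t) ⊆
        frontier U ∪ (Vᶜ ∪ (τ ⁻¹' {0} ∪ τ ⁻¹' {t})) := by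
      intro x hx
      rcases frontier_inter_subset _ _ hx with h | h
      · exact Or.inl h.1
      · by_cases hxV : x ∈ V
        · exact Or.inr (Or.inr (frontier_Ioc_subset_pair 0 t
            (mem_frontier_of_mem_frontier_preimage
              (hτcont.continuousAt (hV.mem_nhds hxV)) h.2)))
        · exact Or.inr (Or.inl hxV)
    exact measure_mono_null hsub (measure_union_null hfr
      (measure_union_null hVfull (measure_union_null (hlevel 0) (hlevel t))))
  refine ⟨hcont, fun K hK => ?_⟩
  refine tendstoLocallyUniformly_iff_forall_isCompact.1
    (tendstoLocallyUniformly_of_monotone (fun n => hmono (ν n)) (hmono lam) hcont fun t => ?_) K hK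
  exact (ENNReal.tendsto_toReal (measure_ne_top _ _)).comp
    (ProbabilityMeasure.tendsto_measure_of_null_frontier_of_tendsto' hweak (hfrontier t))
end

section
/- Let γ₋, γ₀, γ₊ : ℝ → UpperHalfPlane be three isometric embeddings (i.e. dist (γᵢ a) (γᵢ b) = |a − b| for all a, b) whose images are pairwise disjoint, and let s, t be positive real numbers. Then the set of isometric embeddings c : ℝ → UpperHalfPlane satisfying c (−s) ∈ Set.range γ₋, c 0 ∈ Set.range γ₀, and c t ∈ Set.range γ₊ is finite. -/
/-!
The proof takes place in the hyperboloid model. A point `x + iy` is sent to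
`((x² + y²) / y, x / y, 1 / y)` in `ℝ³`, equipped with the Lorentzian form `mink` of the quadratic
form `PR - Q²`; then `mink` computes `cosh dist` (`mink_hyp`). In this model a unit-speed geodesic
is `r ↦ cosh r • E + sinh r • F` for an orthonormal pair `E, F` (`geodesic_param`), and its image is
cut out by a linear functional (`geodesic_functional`).

Complete the frame `E, F` of `γ0` to an orthonormal basis with a normal `N`. A geodesic `c` as in
the theorem starts at `p = cosh u • E + sinh u • F` with velocity `v = x • p' + y • N`,
where `p' = dp/du` and `x² + y² = 1`. If `Lm`, `Lp` are the functionals of `γm`, `γp`, the other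
two incidences become `Lm v = coth s * Lm p` and `Lp v = - coth t * Lp p`. Both are linear in
`(x, y)`; eliminating `x` and `y` by Cramer's rule leaves one polynomial equation in `w = exp (2u)`
of degree at most four. Disjointness of `γm` and `γp` from `γ0` says that `Lm p` and `Lp p` never
vanish, and together with `coth > 1` this prevents the polynomial from being identically
zero (`finite_params`). So there are finitely many `u`, and for each of them at most two unit vectors
`(x, y)` lie on the line given by the first linear equation.
-/

/-! ### The Lorentzian form and orthonormal frames -/

/-- The symmetric bilinear form on `ℝ³` with quadratic form `(P, Q, R) ↦ P R - Q²`, of signature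
`(+, -, -)`. -/
noncomputable def mink (X Y : ℝ × ℝ × ℝ) : ℝ :=
  (X.1 * Y.2.2 + X.2.2 * Y.1 - 2 * X.2.1 * Y.2.1) / 2

/-- The Lorentzian cross product: a vector `mink`-orthogonal to both arguments, normalised so that
an orthonormal pair is completed to an orthonormal basis. -/
noncomputable def minkCross (E F : ℝ × ℝ × ℝ) : ℝ × ℝ × ℝ :=
  (E.1 * F.2.1 - E.2.1 * F.1, (E.1 * F.2.2 - E.2.2 * F.1) / 2, E.2.1 * F.2.2 - E.2.2 * F.2.1)

lemma mink_comm (X Y : ℝ × ℝ × ℝ) : mink X Y = mink Y X := by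
  simp only [mink]; ring

lemma mink_add_left (X Y Z : ℝ × ℝ × ℝ) : mink (X + Y) Z = mink X Z + mink Y Z := by
  simp only [mink, Prod.fst_add, Prod.snd_add]; ring

lemma mink_smul_left (a : ℝ) (X Z : ℝ × ℝ × ℝ) : mink (a • X) Z = a * mink X Z := by
  simp only [mink, Prod.smul_fst, Prod.smul_snd, smul_eq_mul]; ring

lemma mink_add_right (X Y Z : ℝ × ℝ × ℝ) : mink Z (X + Y) = mink Z X + mink Z Y := by
  simp only [mink, Prod.fst_add, Prod.snd_add]; ring

lemma mink_smul_right (a : ℝ) (X Z : ℝ × ℝ × ℝ) : mink Z (a • X) = a * mink Z X := by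
  simp only [mink, Prod.smul_fst, Prod.smul_snd, smul_eq_mul]; ring

/-- `mink` against a fixed vector, as a linear functional. -/
noncomputable def minkFun (N : ℝ × ℝ × ℝ) : (ℝ × ℝ × ℝ) →ₗ[ℝ] ℝ where
  toFun Y := mink Y N
  map_add' X Y := mink_add_left X Y N
  map_smul' a X := mink_smul_left a X N

/-- Cramer's rule for the basis `E, F, minkCross E F`, with the Gram determinant of `E, F` cleared
from the denominators. -/
lemma gram_identity (E F Y : ℝ × ℝ × ℝ) :
    (mink E E * mink F F - mink E F ^ 2) • Y =
      (mink Y E * mink F F - mink Y F * mink E F) • E +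
      (mink Y F * mink E E - mink Y E * mink E F) • F +
      mink Y (minkCross E F) • minkCross E F := by
  ext <;> simp only [mink, minkCross, Prod.smul_fst, Prod.smul_snd, Prod.fst_add, Prod.snd_add,
    smul_eq_mul] <;> ring

/-- Expansion of a vector in the orthonormal basis `E, F, minkCross E F`. -/
lemma frame_expand {E F : ℝ × ℝ × ℝ} (hE : mink E E = 1) (hF : mink F F = -1)
    (hEF : mink E F = 0) (Y : ℝ × ℝ × ℝ) :
    Y = mink Y E • E + (-mink Y F) • F + (-mink Y (minkCross E F)) • minkCross E F := by
  have h := gram_identity E F Y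
  rw [hE, hF, hEF] at h
  calc Y = -(((1 : ℝ) * -1 - 0 ^ 2) • Y) := by module
    _ = _ := by rw [h]; module

lemma frame_parseval {E F : ℝ × ℝ × ℝ} (hE : mink E E = 1) (hF : mink F F = -1)
    (hEF : mink E F = 0) (Y : ℝ × ℝ × ℝ) :
    mink Y Y = mink Y E ^ 2 - mink Y F ^ 2 - mink Y (minkCross E F) ^ 2 := by
  have h := congrArg (mink Y) (frame_expand hE hF hEF Y)
  rw [h]
  simp only [mink_add_right, mink_smul_right]
  ring

lemma minkCross_boost (E F : ℝ × ℝ × ℝ) {a b : ℝ} (h : a ^ 2 - b ^ 2 = 1) :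
    minkCross (a • E + b • F) (b • E + a • F) = minkCross E F := by
  ext <;> simp only [minkCross, Prod.smul_fst, Prod.smul_snd, Prod.fst_add, Prod.snd_add,
    smul_eq_mul]
  · linear_combination (E.1 * F.2.1 - E.2.1 * F.1) * h
  · linear_combination (E.1 * F.2.2 - E.2.2 * F.1) / 2 * h
  · linear_combination (E.2.1 * F.2.2 - E.2.2 * F.2.1) * h

/-! ### The hyperboloid model and its geodesics -/

/-- The point of the hyperboloid `mink X X = 1` corresponding to a point of the upper half-plane. -/
noncomputable def hyp (z : UpperHalfPlane) : ℝ × ℝ × ℝ :=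
  ((z.re ^ 2 + z.im ^ 2) / z.im, z.re / z.im, 1 / z.im)

lemma mink_hyp (z w : UpperHalfPlane) : mink (hyp z) (hyp w) = Real.cosh (dist z w) := by
  have hz := z.im_pos
  have hw := w.im_pos
  rw [UpperHalfPlane.cosh_dist']
  simp only [mink, hyp]
  field_simp
  ring

lemma hyp_injective : Function.Injective hyp := by
  intro z w h
  have h1 := mink_hyp z w
  rw [h, mink_hyp, dist_self, Real.cosh_zero] at h1
  by_contra hne
  have := Real.one_lt_cosh.2 (dist_ne_zero.2 hne)
  linarith

/-- A unit-speed geodesic is a hyperbolic rotation in the plane of an orthonormal frame. The initial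
velocity `F` is recovered from the points at times `0` and `1`. -/
lemma geodesic_param {γ : ℝ → UpperHalfPlane} (h : ∀ a b : ℝ, dist (γ a) (γ b) = |a - b|) :
    ∃ F, mink F F = -1 ∧ mink (hyp (γ 0)) F = 0 ∧
      (∀ r, hyp (γ r) = Real.cosh r • hyp (γ 0) + Real.sinh r • F) := by
  have hB : ∀ a b, mink (hyp (γ a)) (hyp (γ b)) = Real.cosh (a - b) := by
    intro a b
    rw [mink_hyp, h, Real.cosh_abs]
  have hS : Real.sinh 1 ≠ 0 := (Real.sinh_pos_iff.2 one_pos).ne'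
  have hCS := Real.cosh_sq 1
  set E := hyp (γ 0) with hEdef
  have hE : mink E E = 1 := by rw [hB]; simp
  obtain ⟨F, hF⟩ : ∃ F, F = (Real.sinh 1)⁻¹ • (hyp (γ 1) + (-Real.cosh 1) • E) := ⟨_, rfl⟩
  have hYF : ∀ r, mink (hyp (γ r)) F = -Real.sinh r := by
    intro r
    rw [hF, mink_smul_right, mink_add_right, mink_smul_right, hB, hB, Real.cosh_sub, sub_zero]
    field_simp
    ring
  have hEF : mink E F = 0 := by rw [hYF]; simp
  have hFF : mink F F = -1 := by
    nth_rewrite 1 [hF]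
    rw [mink_smul_left, mink_add_left, mink_smul_left, hYF, hEF]
    field_simp
    ring
  refine ⟨F, hFF, hEF, fun r => ?_⟩
  have h1 := frame_parseval hE hFF hEF (hyp (γ r))
  have h2 := frame_expand hE hFF hEF (hyp (γ r))
  rw [hYF, hB, hB, sub_self, sub_zero, Real.cosh_zero] at h1
  rw [hYF, hB, sub_zero] at h2
  have h3 : mink (hyp (γ r)) (minkCross E F) = 0 := by
    have := Real.cosh_sq r
    exact pow_eq_zero_iff two_ne_zero |>.1 (by linarith)
  rw [h2, h3]
  module

/-- The image of a geodesic is the zero set of a linear functional on the hyperboloid. -/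
lemma geodesic_functional {γ : ℝ → UpperHalfPlane}
    (h : ∀ a b : ℝ, dist (γ a) (γ b) = |a - b|) :
    ∃ L : (ℝ × ℝ × ℝ) →ₗ[ℝ] ℝ, ∀ z, L (hyp z) = 0 ↔ z ∈ Set.range γ := by
  obtain ⟨F, hFF, hEF, hγ⟩ := geodesic_param h
  have hE : mink (hyp (γ 0)) (hyp (γ 0)) = 1 := by rw [mink_hyp]; simp
  refine ⟨minkFun (minkCross (hyp (γ 0)) F), fun z => ⟨fun hz => ?_, ?_⟩⟩
  · change mink (hyp z) _ = 0 at hz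
    have h1 := frame_parseval hE hFF hEF (hyp z)
    have h2 := frame_expand hE hFF hEF (hyp z)
    rw [hz, mink_hyp, mink_hyp, dist_self, Real.cosh_zero] at h1
    rw [hz, mink_hyp] at h2
    refine ⟨Real.arsinh (-mink (hyp z) F), hyp_injective ?_⟩
    have hc : Real.cosh (Real.arsinh (-mink (hyp z) F)) = Real.cosh (dist z (γ 0)) := by
      rw [Real.cosh_arsinh, Real.sqrt_eq_iff_eq_sq (by positivity) (Real.cosh_pos _).le]
      linarith
    rw [hγ, Real.sinh_arsinh, hc]
    conv_rhs => rw [h2]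
    module
  · rintro ⟨r, rfl⟩
    change mink (hyp (γ r)) _ = 0
    rw [hγ]
    simp only [mink, minkCross, Prod.smul_fst, Prod.smul_snd, Prod.fst_add, Prod.snd_add,
      smul_eq_mul]
    ring

/-! ### Finiteness of the solutions of the algebraic system -/

lemma quartic_finite (k4 k3 k2 k1 k0 : ℝ)
    (h : ¬(k4 = 0 ∧ k3 = 0 ∧ k2 = 0 ∧ k1 = 0 ∧ k0 = 0)) :
    {w : ℝ | k4 * w ^ 4 + k3 * w ^ 3 + k2 * w ^ 2 + k1 * w + k0 = 0}.Finite := by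
  open Polynomial in
  let p : ℝ[X] := C k4 * X ^ 4 + C k3 * X ^ 3 + C k2 * X ^ 2 + C k1 * X + C k0
  have hp : p ≠ 0 := by
    intro hp
    apply h
    have hc : ∀ n, p.coeff n = 0 := by simp [hp]
    have h0 := hc 0
    have h1 := hc 1
    have h2 := hc 2
    have h3 := hc 3
    have h4 := hc 4
    simp [p, Polynomial.coeff_X, Polynomial.coeff_C] at h0 h1 h2 h3 h4
    exact ⟨h4, h3, h2, h1, h0⟩
  refine (p.rootSet_finite ℝ).subset fun w hw => ?_
  rw [Polynomial.mem_rootSet]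
  refine ⟨hp, ?_⟩
  simpa [p] using hw

/-- Here `z = exp u` is the exponentiated position on `γ0` and `(x, y)` the direction of the
geodesic; `α z + α' / z` and `β z + β' / z` are the values at that position of the functionals of
the outer two geodesics, and `a`, `b` their values on the normal of `γ0`. -/
lemma finite_params {α α' β β' a b A B : ℝ} (hα : ¬(α = 0 ∧ α' = 0)) (hβ : ¬(β = 0 ∧ β' = 0))
    (ha : a ≠ 0) (hb : b ≠ 0) (hA : 1 < A) (hB : 1 < B) :
    {τ : ℝ × ℝ × ℝ | 0 < τ.1 ∧ τ.2.1 ^ 2 + τ.2.2 ^ 2 = 1 ∧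
      τ.2.1 * (α * τ.1 - α' * τ.1⁻¹) + τ.2.2 * a = A * (α * τ.1 + α' * τ.1⁻¹) ∧
      τ.2.1 * (β * τ.1 - β' * τ.1⁻¹) + τ.2.2 * b = -B * (β * τ.1 + β' * τ.1⁻¹)}.Finite := by
  -- The resultant of the system, a polynomial in `w = z²`.
  let G : ℝ → ℝ := fun w =>
    w * (A * b * (α * w + α') + B * a * (β * w + β')) ^ 2
    + (B * (α * w - α') * (β * w + β') + A * (β * w - β') * (α * w + α')) ^ 2
    - w * ((α * w - α') * b - (β * w - β') * a) ^ 2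
  have hG : {w : ℝ | G w = 0}.Finite := by
    have key := quartic_finite ((A + B) ^ 2 * (α * β) ^ 2)
      ((A * b * α + B * a * β) ^ 2 + 2 * ((A + B) * (α * β)) * ((B - A) * (α * β' - α' * β))
        - (α * b - β * a) ^ 2)
      (2 * (A * b * α + B * a * β) * (A * b * α' + B * a * β')
        + ((B - A) * (α * β' - α' * β)) ^ 2 - 2 * ((A + B) * (α * β)) * ((A + B) * (α' * β'))
        + 2 * (α * b - β * a) * (α' * b - β' * a))
      ((A * b * α' + B * a * β') ^ 2 - 2 * ((B - A) * (α * β' - α' * β)) * ((A + B) * (α' * β'))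
        - (α' * b - β' * a) ^ 2)
      ((A + B) ^ 2 * (α' * β') ^ 2) ?_
    · refine key.subset fun w hw => ?_
      simp only [Set.mem_ofPred_eq, G] at hw ⊢
      rw [← hw]
      ring
    · rintro ⟨h4, h3, -, -, h0⟩
      have hAB : (A + B) ^ 2 ≠ 0 := by positivity
      have hαβ : α = 0 ∨ β = 0 := by simpa [hAB] using h4
      have hαβ' : α' = 0 ∨ β' = 0 := by simpa [hAB] using h0
      have hA2 : A ^ 2 - 1 ≠ 0 := by nlinarith
      have hB2 : B ^ 2 - 1 ≠ 0 := by nlinarith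
      -- The extreme coefficients vanish only when both outer geodesics are asymptotic to `γ0`, at
      -- opposite ends; the cubic coefficient then is a multiple of `A² - 1` or of `B² - 1`.
      rcases hαβ with h | h
      · have hα' : α' ≠ 0 := fun h' => hα ⟨h, h'⟩
        have hβ' : β' = 0 := hαβ'.resolve_left hα'
        have hβ0 : β ≠ 0 := fun h' => hβ ⟨h', hβ'⟩
        have : (B ^ 2 - 1) * (a * β) ^ 2 = 0 := by
          rw [h] at h3
          linear_combination h3
        simp [hB2, ha, hβ0] at this
      · have hβ' : β' ≠ 0 := fun h' => hβ ⟨h, h'⟩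
        have hα' : α' = 0 := hαβ'.resolve_right hβ'
        have hα0 : α ≠ 0 := fun h' => hα ⟨h', hα'⟩
        have : (A ^ 2 - 1) * (b * α) ^ 2 = 0 := by
          rw [h] at h3
          linear_combination h3
        simp [hA2, hb, hα0] at this
  -- For a fixed position, `x` is a root of a nonzero quadratic and determines `y`.
  have hfib : ∀ z : ℝ, {x : ℝ | (A * (α * z + α' * z⁻¹) - x * (α * z - α' * z⁻¹)) ^ 2
      = a ^ 2 * (1 - x ^ 2)}.Finite := by
    intro z
    set f := α * z + α' * z⁻¹
    set g := α * z - α' * z⁻¹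
    refine (quartic_finite 0 0 (g ^ 2 + a ^ 2) (-2 * A * f * g) ((A * f) ^ 2 - a ^ 2) ?_).subset ?_
    · rintro ⟨-, -, h, -⟩
      have : 0 < g ^ 2 + a ^ 2 := by positivity
      exact this.ne' h
    · intro x hx
      simp only [Set.mem_ofPred_eq] at hx ⊢
      linear_combination hx
  refine ((hG.image Real.sqrt).biUnion fun z _ => (hfib z).image fun x =>
    (z, x, (A * (α * z + α' * z⁻¹) - x * (α * z - α' * z⁻¹)) / a)).subset ?_
  rintro ⟨z, x, y⟩ ⟨hz, hxy, h1, h2⟩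
  simp only at hz hxy h1 h2
  have hy : y * a = A * (α * z + α' * z⁻¹) - x * (α * z - α' * z⁻¹) := by linarith
  simp only [Set.mem_iUnion, Set.mem_image, Set.mem_ofPred_eq]
  refine ⟨z, ⟨z ^ 2, ?_, Real.sqrt_sq hz.le⟩, x, ?_, ?_⟩
  · have e1 : x * (α * z ^ 2 - α') + y * (a * z) = A * (α * z ^ 2 + α') := by
      field_simp at h1; linear_combination h1
    have e2 : x * (β * z ^ 2 - β') + y * (b * z) = -B * (β * z ^ 2 + β') := by
      field_simp at h2; linear_combination h2
    -- Cramer's rule for `(x, y)`, followed by `x² + y² = 1`.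
    have c1 : x * (((α * z ^ 2 - α') * b - (β * z ^ 2 - β') * a) * z)
        = z * (A * b * (α * z ^ 2 + α') + B * a * (β * z ^ 2 + β')) := by
      linear_combination (b * z) * e1 - (a * z) * e2
    have c2 : y * (((α * z ^ 2 - α') * b - (β * z ^ 2 - β') * a) * z)
        = -(B * (α * z ^ 2 - α') * (β * z ^ 2 + β')
          + A * (β * z ^ 2 - β') * (α * z ^ 2 + α')) := by
      linear_combination (α * z ^ 2 - α') * e2 - (β * z ^ 2 - β') * e1
    simp only [G]
    linear_combination -congrArg (· ^ 2) c1 - congrArg (· ^ 2) c2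
      + (((α * z ^ 2 - α') * b - (β * z ^ 2 - β') * a) * z) ^ 2 * hxy
  · rw [← hy]
    linear_combination a ^ 2 * hxy
  · rw [← hy, mul_div_cancel_right₀ _ ha]

/-- A functional that vanishes nowhere on the geodesic with frame `E, F` but somewhere on the
hyperboloid cannot vanish on the normal of that geodesic. The numbers `(L E ± L F) / 2` are the
coefficients of `exp (± u)` in `L (cosh u • E + sinh u • F)`. -/
lemma functional_nondegenerate {E F : ℝ × ℝ × ℝ} (hE : mink E E = 1) (hF : mink F F = -1)
    (hEF : mink E F = 0) {L : (ℝ × ℝ × ℝ) →ₗ[ℝ] ℝ}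
    (hL : ∀ u, L (Real.cosh u • E + Real.sinh u • F) ≠ 0) {Y : ℝ × ℝ × ℝ} (hY : mink Y Y = 1)
    (hLY : L Y = 0) :
    ¬((L E + L F) / 2 = 0 ∧ (L E - L F) / 2 = 0) ∧ L (minkCross E F) ≠ 0 := by
  have hL' : ∀ u, (L E + L F) * Real.exp u + (L E - L F) * Real.exp (-u) ≠ 0 := by
    intro u h
    apply hL u
    rw [map_add, map_smul, map_smul, Real.cosh_eq, Real.sinh_eq, smul_eq_mul, smul_eq_mul]
    linarith
  generalize hLe : L E = e at *
  have hne : ¬(e + L F = 0 ∧ e - L F = 0) := by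
    rintro ⟨h1, h2⟩
    exact hL' 0 (by simp [h1, h2])
  refine ⟨by rintro ⟨h1, h2⟩; exact hne ⟨by linarith, by linarith⟩, fun hN => ?_⟩
  have h1 := frame_parseval hE hF hEF Y
  have h2 := congrArg L (frame_expand hE hF hEF Y)
  rw [hLY, map_add, map_add, map_smul, map_smul, map_smul, hN, hLe] at h2
  simp only [smul_eq_mul] at h2
  rw [hY] at h1
  set x := mink Y E
  set y := -mink Y F with hy
  have hxy : 0 < (x + y) * (x - y) := by
    have : (x + y) * (x - y) = 1 + mink Y (minkCross E F) ^ 2 := by rw [hy]; linear_combination -h1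
    rw [this]
    positivity
  have hsub : x - y ≠ 0 := right_ne_zero_of_mul (ne_of_gt hxy)
  -- The projection of `Y` to the plane of `E, F` is timelike, so a multiple of it is a point of the
  -- geodesic, at the parameter `u` with `exp (2u) = (x + y) / (x - y)`.
  have hw : 0 < (x + y) / (x - y) := by
    have : (x + y) / (x - y) = (x + y) * (x - y) / (x - y) ^ 2 := by field_simp
    rw [this]
    positivity
  apply hL' (Real.log ((x + y) / (x - y)) / 2)
  have hq : Real.exp (Real.log ((x + y) / (x - y)) / 2) ^ 2 = (x + y) / (x - y) := by
    rw [← Real.exp_nat_mul]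
    push_cast
    rw [mul_div_cancel₀ _ (two_ne_zero), Real.exp_log hw]
  rw [Real.exp_neg]
  set q := Real.exp (Real.log ((x + y) / (x - y)) / 2)
  have hq0 : q ≠ 0 := (Real.exp_pos _).ne'
  have h3 : (e + L F) * q ^ 2 + (e - L F) = 0 := by
    rw [hq]
    field_simp
    linear_combination -2 * h2
  field_simp
  linear_combination h3

/-- Given three pairwise disjoint complete unit-speed geodesics `γm, γ0, γp` of the
hyperbolic plane and times `s, t > 0`, there are only finitely many unit-speed geodesics
passing through `γm` at time `-s`, through `γ0` at time `0`, and through `γp` at time `t`. -/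
theorem finite_geodesics_through_three_geodesics
    (γm γ0 γp : ℝ → UpperHalfPlane)
    (hm : ∀ a b : ℝ, dist (γm a) (γm b) = |a - b|)
    (h0 : ∀ a b : ℝ, dist (γ0 a) (γ0 b) = |a - b|)
    (hp : ∀ a b : ℝ, dist (γp a) (γp b) = |a - b|)
    (hd1 : Disjoint (Set.range γm) (Set.range γ0))
    (hd2 : Disjoint (Set.range γm) (Set.range γp))
    (hd3 : Disjoint (Set.range γ0) (Set.range γp))
    (s t : ℝ) (hs : 0 < s) (ht : 0 < t) :
    {c : ℝ → UpperHalfPlane |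
      (∀ a b : ℝ, dist (c a) (c b) = |a - b|) ∧
      c (-s) ∈ Set.range γm ∧ c 0 ∈ Set.range γ0 ∧ c t ∈ Set.range γp}.Finite := by
  obtain ⟨Lm, hLm⟩ := geodesic_functional hm
  obtain ⟨Lp, hLp⟩ := geodesic_functional hp
  obtain ⟨F, hF, hEF, hγ⟩ := geodesic_param h0
  have hone : ∀ z, mink (hyp z) (hyp z) = 1 := fun z => by rw [mink_hyp]; simp
  have hE := hone (γ0 0)
  set E := hyp (γ0 0)
  set N := minkCross E F
  obtain ⟨hαm, ham⟩ := functional_nondegenerate hE hF hEF (L := Lm) (fun u h => by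
    rw [← hγ u, hLm] at h
    exact Set.disjoint_left.1 hd1 h ⟨u, rfl⟩) (hone (γm 0)) ((hLm _).2 ⟨0, rfl⟩)
  obtain ⟨hαp, hap⟩ := functional_nondegenerate hE hF hEF (L := Lp) (fun u h => by
    rw [← hγ u, hLp] at h
    exact Set.disjoint_left.1 hd3 ⟨u, rfl⟩ h) (hone (γp 0)) ((hLp _).2 ⟨0, rfl⟩)
  have coth : ∀ r : ℝ, 0 < r → 1 < Real.cosh r / Real.sinh r := fun r hr =>
    (one_lt_div (Real.sinh_pos_iff.2 hr)).2 (Real.sinh_lt_cosh r)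
  have hfin := finite_params hαm hαp ham hap (coth s hs) (coth t ht)
  -- Position and velocity at time `0` as functions of the parameters `τ = (exp u, x, y)`.
  let p : ℝ → ℝ × ℝ × ℝ := fun z => ((z + z⁻¹) / 2) • E + ((z - z⁻¹) / 2) • F
  let p' : ℝ → ℝ × ℝ × ℝ := fun z => ((z - z⁻¹) / 2) • E + ((z + z⁻¹) / 2) • F
  have hex : ∀ c : ℝ → UpperHalfPlane, ∃ τ : ℝ × ℝ × ℝ,
      ((∀ a b : ℝ, dist (c a) (c b) = |a - b|) ∧
        c (-s) ∈ Set.range γm ∧ c 0 ∈ Set.range γ0 ∧ c t ∈ Set.range γp) →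
      (0 < τ.1 ∧ τ.2.1 ^ 2 + τ.2.2 ^ 2 = 1 ∧
        τ.2.1 * ((Lm E + Lm F) / 2 * τ.1 - (Lm E - Lm F) / 2 * τ.1⁻¹) + τ.2.2 * Lm N
          = Real.cosh s / Real.sinh s * ((Lm E + Lm F) / 2 * τ.1 + (Lm E - Lm F) / 2 * τ.1⁻¹) ∧
        τ.2.1 * ((Lp E + Lp F) / 2 * τ.1 - (Lp E - Lp F) / 2 * τ.1⁻¹) + τ.2.2 * Lp N
          = -(Real.cosh t / Real.sinh t)
            * ((Lp E + Lp F) / 2 * τ.1 + (Lp E - Lp F) / 2 * τ.1⁻¹)) ∧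
      ∀ r, hyp (c r) = Real.cosh r • p τ.1 + Real.sinh r • (τ.2.1 • p' τ.1 + τ.2.2 • N) := by
    intro c
    by_cases hc : ((∀ a b : ℝ, dist (c a) (c b) = |a - b|) ∧
        c (-s) ∈ Set.range γm ∧ c 0 ∈ Set.range γ0 ∧ c t ∈ Set.range γp)
    swap
    · exact ⟨0, fun h => absurd h hc⟩
    obtain ⟨hc, hcm, ⟨u, hu⟩, hcp⟩ := hc
    obtain ⟨v, hv, hpv, hcr⟩ := geodesic_param hc
    have hz : 0 < Real.exp u := Real.exp_pos u
    have hpu : hyp (c 0) = p (Real.exp u) := by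
      rw [← hu, hγ, Real.cosh_eq, Real.sinh_eq, Real.exp_neg]
    set z := Real.exp u
    have hzz : ((z + z⁻¹) / 2) ^ 2 - ((z - z⁻¹) / 2) ^ 2 = 1 := by field_simp; ring
    rw [hpu] at hpv hcr
    have hpp : mink (p z) (p z) = 1 := by rw [← hpu, hone]
    have hdd : mink (p' z) (p' z) = -1 := by
      simp only [p', mink_add_left, mink_add_right, mink_smul_left, mink_smul_right, hE, hF, hEF,
        mink_comm F E]
      linear_combination -hzz
    have hpp' : mink (p z) (p' z) = 0 := by
      simp only [p, p', mink_add_left, mink_add_right, mink_smul_left, mink_smul_right, hE, hF,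
        hEF, mink_comm F E]
      ring
    have hN : minkCross (p z) (p' z) = N := minkCross_boost E F hzz
    have h1 := frame_parseval hpp hdd hpp' v
    have h2 := frame_expand hpp hdd hpp' v
    rw [mink_comm v (p z), hpv, hN] at h1 h2
    rw [hv] at h1
    rw [zero_smul, zero_add] at h2
    have hLpz : ∀ L : (ℝ × ℝ × ℝ) →ₗ[ℝ] ℝ,
        L (p z) = (L E + L F) / 2 * z + (L E - L F) / 2 * z⁻¹ := by
      intro L
      simp only [p, map_add, map_smul, smul_eq_mul]
      ring
    have hLp'z : ∀ L : (ℝ × ℝ × ℝ) →ₗ[ℝ] ℝ,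
        L (p' z) = (L E + L F) / 2 * z - (L E - L F) / 2 * z⁻¹ := by
      intro L
      simp only [p', map_add, map_smul, smul_eq_mul]
      ring
    have hLv : ∀ L : (ℝ × ℝ × ℝ) →ₗ[ℝ] ℝ,
        L v = -mink v (p' z) * L (p' z) + -mink v N * L N := by
      intro L
      conv_lhs => rw [h2]
      simp only [map_add, map_smul, smul_eq_mul]
    have hss := (Real.sinh_pos_iff.2 hs).ne'
    have hst := (Real.sinh_pos_iff.2 ht).ne'
    refine ⟨(z, -mink v (p' z), -mink v N), fun _ => ⟨⟨hz, ?_, ?_, ?_⟩, ?_⟩⟩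
    · simp only
      linear_combination h1
    · simp only
      rw [← hLpz, ← hLp'z, ← hLv]
      have h := (hLm _).2 hcm
      rw [hcr, map_add, map_smul, map_smul, Real.cosh_neg, Real.sinh_neg, smul_eq_mul,
        smul_eq_mul] at h
      field_simp
      linear_combination -h
    · simp only
      rw [← hLpz, ← hLp'z, ← hLv]
      have h := (hLp _).2 hcp
      rw [hcr, map_add, map_smul, map_smul, smul_eq_mul, smul_eq_mul] at h
      field_simp
      linear_combination h
    · intro r
      simp only
      rw [← h2, hcr]
  choose g hg using hex
  refine Set.Finite.of_injOn (f := g) (fun c hc => (hg c hc).1) ?_ hfin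
  intro c hc d hd hcd
  funext r
  apply hyp_injective
  rw [(hg c hc).2 r, (hg d hd).2 r, hcd]
end
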